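/- Let Δ be the bicyclic graph built as follows: take two vertices u and v joined by three internally disjoint paths R₁: u–a₁–a₃–a₅–v, R₂: u–a₂–a₄–a₆–v, and R₃ of length ℓ ≥ 1 with no trees attached at its internal vertices; attach a rooted tree T_i at a_i for 1 ≤ i ≤ 6, and attach no trees at u and v. Assume T₁ ≅ T₂, T₃ ≅ T₄ and T₅ ≅ T₆ as rooted trees, that T₁ is not isomorphic to T₅ as a rooted tree, and that ℓ ≠ 4 or at least one of T₁, T₃, T₅ has more than one vertex. Set G₁ = Aut(T₁)_{root}, G₂ = Aut(T₃)_{root}, G₃ = Aut(T₅)_{root}. Then Aut(Δ) ≅ (G₁ × G₂ × G₃) ≀ Z₂. -/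

import Mathlib

open SimpleGraph

/-- The stabilizer `Aut(G)_v = {f ∈ Aut(G) : f(v) = v}` of a vertex `v` in the automorphism
group of a graph `G`. -/
def autStab {V : Type} (G : SimpleGraph V) (v : V) : Subgroup (G ≃g G) where
  carrier := {f | f v = v}
  one_mem' := rfl
  mul_mem' := by
    intro f g hf hg
    simp only [Set.mem_setOf_eq] at *
    show f (g v) = v
    rw [hg, hf]
  inv_mem' := by
    intro f hf
    simp only [Set.mem_setOf_eq] at *
    calc f⁻¹ v = f⁻¹ (f v) := by rw [hf]
    _ = v := RelIso.inv_apply_self f v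

/-- The swap action of `Z₂` on `G × G`. -/
def swapHom (G : Type) [Group G] : Multiplicative (ZMod 2) →* MulAut (G × G) where
  toFun g := if Multiplicative.toAdd g = 1 then (MulEquiv.prodComm : G × G ≃* G × G) else 1
  map_one' := by
    show (if (0 : ZMod 2) = 1 then (MulEquiv.prodComm : G × G ≃* G × G) else 1) = 1
    norm_num
  map_mul' x y := by
    have h2 : ∀ z : ZMod 2, z = 0 ∨ z = 1 := by decide
    have hs : (MulEquiv.prodComm : G × G ≃* G × G) * MulEquiv.prodComm = 1 := by
      ext z <;> rfl
    show (if Multiplicative.toAdd x + Multiplicative.toAdd y = 1 then _ else _) = _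
    rcases h2 (Multiplicative.toAdd x) with hx | hx <;>
      rcases h2 (Multiplicative.toAdd y) with hy | hy <;>
        simp [hx, hy, hs, show (1 + 1 : ZMod 2) = 0 from rfl,
          show (0 : ZMod 2) ≠ 1 by decide, show (1 : ZMod 2) ≠ 0 by decide]

/-- The wreath product `G ≀ Z₂ = (G × G) ⋊ Z₂`, where the nontrivial element of `Z₂`
swaps the two coordinates. -/
def wreathZ2 (G : Type) [Group G] : Type :=
  (G × G) ⋊[swapHom G] Multiplicative (ZMod 2)

instance (G : Type) [Group G] : Group (wreathZ2 G) :=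
  inferInstanceAs (Group ((G × G) ⋊[swapHom G] Multiplicative (ZMod 2)))

/-- The graph obtained from `base` by attaching, for each `i : ι`, the rooted tree
`(T i, t i)` at the vertex `x i` (identifying the root `t i` with `x i`); the attached trees
are pairwise disjoint and disjoint from `base` except at the attachment vertices. -/
def attachTrees {B : Type} (base : SimpleGraph B) {ι : Type} {W : ι → Type}
    (T : ∀ i, SimpleGraph (W i)) (t : ∀ i, W i) (x : ι → B) :
    SimpleGraph (B ⊕ Σ i, {w : W i // w ≠ t i}) where
  Adj a b :=
    match a, b with
    | .inl a, .inl b => base.Adj a b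
    | .inl a, .inr ⟨i, w⟩ => a = x i ∧ (T i).Adj (t i) w.1
    | .inr ⟨i, w⟩, .inl b => b = x i ∧ (T i).Adj (t i) w.1
    | .inr ⟨i, w⟩, .inr ⟨j, w'⟩ => ∃ h : i = j, (T j).Adj (h ▸ w).1 w'.1
  symm := by
    constructor
    rintro (a | ⟨i, w⟩) (b | ⟨j, w'⟩) h
    · exact base.symm.symm _ _ h
    · exact h
    · exact h
    · obtain ⟨rfl, hw⟩ := h
      exact ⟨rfl, (T i).symm.symm _ _ hw⟩
  loopless := by
    constructor
    rintro (a | ⟨i, w⟩) h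
    · exact base.loopless.irrefl a h
    · obtain ⟨h', hw⟩ := h
      exact (T i).loopless.irrefl _ hw

/-- Vertices of a theta graph: two hub vertices `u`, `v` joined by three internally disjoint
paths having `p`, `q` and `r` internal vertices respectively. -/
inductive ThetaV (p q r : ℕ) : Type where
  | u : ThetaV p q r
  | v : ThetaV p q r
  | x1 : Fin p → ThetaV p q r
  | x2 : Fin q → ThetaV p q r
  | x3 : Fin r → ThetaV p q r
  deriving DecidableEq

/-- The theta graph: the vertices `u` and `v` joined by three internally disjoint paths of
lengths `p + 1`, `q + 1` and `r + 1`; the internal vertices of each path are indexed starting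
from the end adjacent to `v`. -/
def theta (p q r : ℕ) : SimpleGraph (ThetaV p q r) where
  Adj a b :=
    match a, b with
    | .u, .v => p = 0 ∨ q = 0 ∨ r = 0
    | .v, .u => p = 0 ∨ q = 0 ∨ r = 0
    | .v, .x1 i => i.val = 0
    | .x1 i, .v => i.val = 0
    | .u, .x1 i => i.val = p - 1
    | .x1 i, .u => i.val = p - 1
    | .v, .x2 i => i.val = 0
    | .x2 i, .v => i.val = 0
    | .u, .x2 i => i.val = q - 1
    | .x2 i, .u => i.val = q - 1
    | .v, .x3 i => i.val = 0
    | .x3 i, .v => i.val = 0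
    | .u, .x3 i => i.val = r - 1
    | .x3 i, .u => i.val = r - 1
    | .x1 i, .x1 j => i.val + 1 = j.val ∨ j.val + 1 = i.val
    | .x2 i, .x2 j => i.val + 1 = j.val ∨ j.val + 1 = i.val
    | .x3 i, .x3 j => i.val + 1 = j.val ∨ j.val + 1 = i.val
    | _, _ => False
  symm := by
    constructor
    intro a b h
    cases a <;> cases b <;> simp only [] at h ⊢ <;> tauto
  loopless := by
    constructor
    intro a h
    cases a <;> simp only [] at h <;> omega

/-- Index type for the six trees attached in Lemma 2.4: `T₁, T₃, T₅` (at `a₁, a₃, a₅` on the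
first path) and `T₂, T₄, T₆` (at `a₂, a₄, a₆` on the second path). -/
abbrev Stmt4Index : Type := Fin 3 ⊕ Fin 3

/-- The family of vertex types of the six attached trees. -/
def stmt4W (WA WB : Fin 3 → Type) : Stmt4Index → Type := Sum.elim WA WB

/-- The family of the six attached trees. -/
def stmt4T {WA WB : Fin 3 → Type}
    (TA : ∀ j, SimpleGraph (WA j)) (TB : ∀ j, SimpleGraph (WB j)) :
    ∀ i, SimpleGraph (stmt4W WA WB i) :=
  fun i =>
    match i with
    | .inl j => TA j
    | .inr j => TB j

/-- The family of roots of the six attached trees. -/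
def stmt4root {WA WB : Fin 3 → Type} (tA : ∀ j, WA j) (tB : ∀ j, WB j) :
    ∀ i, stmt4W WA WB i :=
  fun i =>
    match i with
    | .inl j => tA j
    | .inr j => tB j

/-- Attachment vertices on the theta graph with hub vertices `u`, `v`, paths
`R₁ : u–a₁–a₃–a₅–v`, `R₂ : u–a₂–a₄–a₆–v` and `R₃` of length `m + 1`:
the tree `T_{2j+1}` is attached at `a_{2j+1}` and `T_{2j+2}` at `a_{2j+2}`;
no trees are attached at `u` and `v`. -/
def stmt4x (m : ℕ) : Stmt4Index → ThetaV 3 3 m :=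
  fun i =>
    match i with
    | .inl j => ThetaV.x1 ⟨2 - j.1, by omega⟩
    | .inr j => ThetaV.x2 ⟨2 - j.1, by omega⟩

/-- The bicyclic graph of Lemma 2.4. -/
def stmt4Graph (m : ℕ) {WA WB : Fin 3 → Type}
    (TA : ∀ j, SimpleGraph (WA j)) (TB : ∀ j, SimpleGraph (WB j))
    (tA : ∀ j, WA j) (tB : ∀ j, WB j) :=
  attachTrees (theta 3 3 m) (stmt4T TA TB) (stmt4root tA tB) (stmt4x m)

/-!
A finite set of vertices in which every vertex has at least two neighbors cannot reach into an
attached tree beyond its root. Hence every automorphism of `Δ` maps the theta graph onto itself,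
permutes the trees attached to it up to rooted isomorphism, and is determined by its action on the
theta graph together with the isomorphisms it induces between the trees.

Since `T₁ ≇ T₅`, at least one of these two trees has more than one vertex, so the vertices of the
third path, which carry no trees, cannot be exchanged with those of `R₁` or `R₂`. For the same
reason `u` and `v` cannot be exchanged, as this would carry `T₅` onto `T₁`. What remains on the
theta graph is the identity and the exchange of `R₁` with `R₂`. The automorphisms that fix the
theta graph pointwise form `(G₁ × G₂ × G₃) × (G₁ × G₂ × G₃)`, and the exchange, lifted along the
isomorphisms `T₁ ≅ T₂`, `T₃ ≅ T₄`, `T₅ ≅ T₆`, is an involution that swaps the two factors.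
-/

/-! ### Wreath products with a group of order two -/

namespace wreathZ2

variable {A : Type*} [Group A] {G : Type} [Group G]

theorem swapHom_ofAdd_one (p : G × G) : swapHom G (.ofAdd 1) p = p.swap := by
  simp [swapHom]

theorem eq_one_or_eq_ofAdd_one (z : Multiplicative (ZMod 2)) : z = 1 ∨ z = .ofAdd 1 := by
  revert z
  decide

/-- The isomorphism of wreath products induced by an isomorphism of their base groups. -/
def congr {H : Type} [Group H] (e : G ≃* H) : wreathZ2 G ≃* wreathZ2 H :=
  SemidirectProduct.congr (e.prodCongr e) (MulEquiv.refl _) fun z => by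
    ext p : 1
    rcases eq_one_or_eq_ofAdd_one z with rfl | rfl
    · simp
    · simp only [MulEquiv.trans_apply, MulEquiv.refl_apply, swapHom_ofAdd_one]
      rfl

/-- The homomorphism from the cyclic group of order two that sends its generator to `s`. -/
def homOfInvolution {s : A} (hs : s * s = 1) : Multiplicative (ZMod 2) →* A :=
  AddMonoidHom.toMultiplicativeLeft <|
    ZMod.lift 2 ⟨zmultiplesHom _ (Additive.ofMul s), by simp [two_zsmul, ← ofMul_mul, hs]⟩

theorem homOfInvolution_ofAdd_one {s : A} (hs : s * s = 1) :
    homOfInvolution hs (.ofAdd 1) = s := by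
  have h := ZMod.lift_coe 2 (A := Additive A)
    ⟨zmultiplesHom _ (.ofMul s), by simp [two_zsmul, ← ofMul_mul, hs]⟩ 1
  simpa [homOfInvolution] using congrArg Additive.toMul h

/-- The homomorphism `G ≀ Z₂ → A` determined by a homomorphism on the base group `G × G` and an
involution that acts on its image by swapping the two factors. -/
def lift (φ : G × G →* A) {s : A} (hs : s * s = 1) (hconj : ∀ p, s * φ p * s⁻¹ = φ p.swap) :
    wreathZ2 G →* A :=
  SemidirectProduct.lift φ (homOfInvolution hs) fun z => by
    ext p : 1
    rcases eq_one_or_eq_ofAdd_one z with rfl | rfl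
    · simp
    · simp [swapHom_ofAdd_one, homOfInvolution_ofAdd_one, hconj]

theorem nonempty_mulEquiv (φ : G × G →* A) (hφ : Function.Injective φ) {s : A} (hs : s * s = 1)
    (hconj : ∀ p, s * φ p * s⁻¹ = φ p.swap) (hs_mem : s ∉ φ.range)
    (hcover : ∀ a, a ∈ φ.range ∨ a * s ∈ φ.range) : Nonempty (A ≃* wreathZ2 G) := by
  have lift_one (p) : lift φ hs hconj ⟨p, 1⟩ = φ p :=
    SemidirectProduct.lift_inl ..
  have lift_ofAdd_one (p) : lift φ hs hconj ⟨p, .ofAdd 1⟩ = φ p * s :=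
    congrArg (φ p * ·) (homOfInvolution_ofAdd_one hs)
  refine ⟨(MulEquiv.ofBijective (lift φ hs hconj) ⟨?_, fun a => ?_⟩).symm⟩
  · refine (injective_iff_map_eq_one _).2 ?_
    rintro ⟨p, z⟩ h
    rcases eq_one_or_eq_ofAdd_one z with rfl | rfl
    · rw [lift_one, map_eq_one_iff φ hφ] at h
      rw [h]
      rfl
    · rw [lift_ofAdd_one] at h
      exact (hs_mem ⟨p⁻¹, by rw [map_inv, inv_eq_of_mul_eq_one_right h]⟩).elim
  · rcases hcover a with ⟨p, hp⟩ | ⟨p, hp⟩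
    · exact ⟨⟨p, 1⟩, (lift_one p).trans hp⟩
    · exact ⟨⟨p, .ofAdd 1⟩, by rw [lift_ofAdd_one, hp, mul_assoc, hs, mul_one]⟩

end wreathZ2

/-! ### Finite subsets of trees -/

section Tree

variable {V : Type*} {G : SimpleGraph V}

theorem induction_on_adj_of_preconnected (hG : G.Preconnected) {P : V → Prop} {r : V} (root : P r)
    (step : ∀ v w, G.Adj v w → P v → P w) (v : V) : P v := by
  induction (reachable_iff_reflTransGen r v).1 (hG r v) with
  | refl => exact root
  | tail _ hadj ih => exact step _ _ hadj ih

theorem exists_isPath_penultimate_eq_of_isTree (hG : G.IsTree) {r v w : V} (hadj : G.Adj v w)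
    (hdist : G.dist r v ≤ G.dist r w) : ∃ p : G.Walk r w, p.IsPath ∧ p.penultimate = v := by
  obtain ⟨p, hp⟩ := hG.connected.exists_walk_length_eq_dist r v
  have hw := hG.dist_eq_dist_add_one_of_adj r hadj
  refine ⟨p.concat hadj, Walk.isPath_of_length_eq_dist _ ?_, by simp⟩
  rw [Walk.length_concat]
  omega

theorem eq_of_adj_of_dist_le_of_isTree (hG : G.IsTree) {r v v' w : V} (hv : G.Adj v w)
    (hv' : G.Adj v' w) (hdist : G.dist r v ≤ G.dist r w) (hdist' : G.dist r v' ≤ G.dist r w) :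
    v = v' := by
  obtain ⟨p, hp, rfl⟩ := exists_isPath_penultimate_eq_of_isTree hG hv hdist
  obtain ⟨q, hq, rfl⟩ := exists_isPath_penultimate_eq_of_isTree hG hv' hdist'
  rw [(hG.existsUnique_path r w).unique hp hq]

-- A vertex of `S` farthest from the root has at most one neighbor in `S`, namely its parent.
theorem subset_singleton_of_nontrivial_neighbors_of_isTree (hG : G.IsTree) {r : V} {S : Set V}
    (hfin : S.Finite) (hS : ∀ v ∈ S, v ≠ r → (G.neighborSet v ∩ S).Nontrivial) : S ⊆ {r} := by
  intro v hv
  obtain ⟨w, hw, hmax⟩ := S.exists_max_image (G.dist r) hfin ⟨v, hv⟩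
  obtain rfl | hwr := eq_or_ne w r
  · simpa [hG.connected.dist_eq_zero_iff, eq_comm] using hmax v hv
  · obtain ⟨a, ha, b, hb, hab⟩ := hS w hw hwr
    have heq := eq_of_adj_of_dist_le_of_isTree hG ha.1.symm hb.1.symm (hmax a ha.2) (hmax b hb.2)
    exact (hab heq).elim

end Tree

/-- Conjugation by a graph isomorphism, as an isomorphism of automorphism groups. -/
def autCongr {V V' : Type*} {G : SimpleGraph V} {G' : SimpleGraph V'} (e : G ≃g G') :
    (G ≃g G) ≃* (G' ≃g G') where
  toFun f := (e.symm.trans f).trans e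
  invFun f := (e.trans f).trans e.symm
  left_inv f := by ext; simp
  right_inv f := by ext; simp
  map_mul' f g := by ext; simp [RelIso.mul_apply]

/-! ### Isomorphisms of graphs with attached trees -/

namespace attachTrees

variable {B B' ι ι' : Type} {base : SimpleGraph B} {base' : SimpleGraph B'}
  {W : ι → Type} {W' : ι' → Type} {T : ∀ i, SimpleGraph (W i)} {T' : ∀ i, SimpleGraph (W' i)}
  {t : ∀ i, W i} {t' : ∀ i, W' i} {x : ι → B} {x' : ι' → B'}

/-- The isomorphism assembled from an isomorphism of the base graphs and root-preserving
isomorphisms of the attached trees. -/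
def iso (σ : base ≃g base') (π : ι ≃ ι') (hσ : ∀ i, σ (x i) = x' (π i))
    (e : ∀ i, T i ≃g T' (π i)) (he : ∀ i, e i (t i) = t' (π i)) :
    attachTrees base T t x ≃g attachTrees base' T' t' x' where
  toEquiv := σ.toEquiv.sumCongr <| π.sigmaCongr fun i =>
    (e i).toEquiv.subtypeEquiv fun w => by simp [← he]
  map_rel_iff' := by
    have root_adj_iff (i) (w : W i) : (T' (π i)).Adj (t' (π i)) (e i w) ↔ (T i).Adj (t i) w := by
      rw [← he, (e i).map_adj_iff]
    have attach_iff (b : B) (i : ι) : σ b = x' (π i) ↔ b = x i := by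
      rw [← hσ, σ.injective.eq_iff]
    rintro (b | ⟨i, w⟩) (b' | ⟨j, w'⟩)
    · exact σ.map_adj_iff
    · exact and_congr (attach_iff b j) (root_adj_iff j w')
    · exact and_congr (attach_iff b' i) (root_adj_iff i w)
    · constructor
      · rintro ⟨hij, hadj⟩
        obtain rfl := π.injective hij
        exact ⟨rfl, (e i).map_adj_iff.1 hadj⟩
      · rintro ⟨rfl, hadj⟩
        exact ⟨rfl, (e i).map_adj_iff.2 hadj⟩

/-- The action on `attachTrees base T t x`, fixing the base, of the product of the root
stabilizers of the attached trees. -/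
def treeAut (base : SimpleGraph B) (T : ∀ i, SimpleGraph (W i)) (t : ∀ i, W i) (x : ι → B) :
    (∀ i, autStab (T i) (t i)) →* (attachTrees base T t x ≃g attachTrees base T t x) where
  toFun g := iso (RelIso.refl _) (Equiv.refl _) (fun _ => rfl) (fun i => (g i).1) fun i => (g i).2
  map_one' := by ext (b | ⟨i, w⟩) : 1 <;> rfl
  map_mul' g h := by ext (b | ⟨i, w⟩) : 1 <;> rfl

theorem treeAut_inl (g : ∀ i, autStab (T i) (t i)) (b : B) :
    treeAut base T t x g (.inl b) = .inl b :=
  rfl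

theorem treeAut_inr (g : ∀ i, autStab (T i) (t i)) (i : ι) (w : {w : W i // w ≠ t i}) :
    treeAut base T t x g (.inr ⟨i, w⟩) =
      .inr ⟨i, (g i).1 w, fun h => w.2 ((g i).1.injective (h.trans (g i).2.symm))⟩ :=
  rfl

theorem treeAut_injective : Function.Injective (treeAut base T t x) := by
  refine (injective_iff_map_eq_one _).2 fun g hg => ?_
  ext i w : 3
  obtain rfl | hw := eq_or_ne w (t i)
  · exact (g i).2
  · have h := DFunLike.congr_fun hg (.inr ⟨i, w, hw⟩)
    rw [treeAut_inr] at h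
    simpa using h

open Classical in
/-- The copy in `attachTrees base T t x` of a vertex of the `i`-th tree, the root being identified
with the attachment vertex `x i`. -/
noncomputable def treeVertex (t : ∀ i, W i) (x : ι → B) (i : ι) (w : W i) :
    B ⊕ Σ i, {w : W i // w ≠ t i} :=
  if hw : w = t i then .inl (x i) else .inr ⟨i, w, hw⟩

@[simp]
theorem treeVertex_root (i : ι) : treeVertex t x i (t i) = .inl (x i) := dif_pos rfl

theorem treeVertex_of_ne {i : ι} {w : W i} (hw : w ≠ t i) :
    treeVertex t x i w = .inr ⟨i, w, hw⟩ :=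
  dif_neg hw

theorem treeVertex_mem_range_inl_iff {i : ι} {w : W i} :
    treeVertex t x i w ∈ Set.range Sum.inl ↔ w = t i := by
  by_cases hw : w = t i <;> simp [treeVertex, hw]

theorem treeVertex_injective (i : ι) : Function.Injective (treeVertex t x i) := by
  intro w w' h
  by_cases hw : w = t i <;> by_cases hw' : w' = t i <;> simp_all [treeVertex]

theorem adj_treeVertex_iff {i : ι} {w w' : W i} :
    (attachTrees base T t x).Adj (treeVertex t x i w) (treeVertex t x i w') ↔
      (T i).Adj w w' := by
  by_cases hw : w = t i <;> by_cases hw' : w' = t i <;>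
    simp [treeVertex, hw, hw', attachTrees, (T i).adj_comm]

theorem exists_treeVertex_of_adj_inr {i : ι} {w : {w : W i // w ≠ t i}}
    {y : B ⊕ Σ i, {w : W i // w ≠ t i}}
    (hadj : (attachTrees base T t x).Adj (.inr ⟨i, w⟩) y) :
    ∃ w', y = treeVertex t x i w' ∧ (T i).Adj w w' := by
  rcases y with b | ⟨j, w'⟩
  · obtain ⟨rfl, hroot⟩ := hadj
    exact ⟨t i, (treeVertex_root i).symm, hroot.symm⟩
  · obtain ⟨rfl, hww'⟩ := hadj
    exact ⟨w', (treeVertex_of_ne w'.2).symm, hww'⟩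

theorem exists_treeVertex_of_adj_treeVertex (hx : Function.Injective x) {i : ι} {w : W i}
    {y : B ⊕ Σ i, {w : W i // w ≠ t i}} (hy : y ∉ Set.range Sum.inl)
    (hadj : (attachTrees base T t x).Adj (treeVertex t x i w) y) :
    ∃ w', y = treeVertex t x i w' := by
  obtain rfl | hw := eq_or_ne w (t i)
  · rcases y with b | ⟨j, w'⟩
    · exact (hy ⟨b, rfl⟩).elim
    · rw [treeVertex_root] at hadj
      obtain rfl := hx hadj.1
      exact ⟨w', (treeVertex_of_ne w'.2).symm⟩
  · rw [treeVertex_of_ne hw] at hadj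
    exact (exists_treeVertex_of_adj_inr hadj).imp fun _ => And.left

theorem subset_range_inl_of_nontrivial_neighbors (hT : ∀ i, (T i).IsTree)
    {S : Set (B ⊕ Σ i, {w : W i // w ≠ t i})} (hfin : S.Finite)
    (hS : ∀ y ∈ S, ((attachTrees base T t x).neighborSet y ∩ S).Nontrivial) :
    S ⊆ Set.range Sum.inl := by
  rintro (b | ⟨i, w⟩) hy
  · exact ⟨b, rfl⟩
  have hsub : treeVertex t x i ⁻¹' S ⊆ {t i} := by
    refine subset_singleton_of_nontrivial_neighbors_of_isTree (hT i)
      (hfin.preimage (treeVertex_injective i).injOn) fun v hv hvt => ?_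
    rw [Set.mem_preimage, treeVertex_of_ne hvt] at hv
    obtain ⟨y, hy, z, hz, hyz⟩ := hS _ hv
    obtain ⟨v₁, rfl, hadj₁⟩ := exists_treeVertex_of_adj_inr hy.1
    obtain ⟨v₂, rfl, hadj₂⟩ := exists_treeVertex_of_adj_inr hz.1
    exact ⟨v₁, ⟨hadj₁, hy.2⟩, v₂, ⟨hadj₂, hz.2⟩, fun h => hyz (congrArg _ h)⟩
  exact (w.2 (hsub (by rwa [Set.mem_preimage, treeVertex_of_ne w.2]))).elim

section Iso

variable (f : attachTrees base T t x ≃g attachTrees base' T' t' x')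

-- The image of the base is a finite set in which every vertex has at least two neighbors.
theorem map_inl_mem_range_inl [Finite B] (hbase : ∀ b, (base.neighborSet b).Nontrivial)
    (hT' : ∀ i, (T' i).IsTree) (b : B) : f (.inl b) ∈ Set.range Sum.inl := by
  refine subset_range_inl_of_nontrivial_neighbors (base := base') (x := x') hT'
    (Set.finite_range fun b => f (.inl b)) ?_ ⟨b, rfl⟩
  rintro _ ⟨b, rfl⟩
  obtain ⟨c, hc, d, hd, hcd⟩ := hbase b
  exact ⟨f (.inl c), ⟨f.map_adj_iff.2 hc, c, rfl⟩, f (.inl d), ⟨f.map_adj_iff.2 hd, d, rfl⟩,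
    fun h => hcd (Sum.inl_injective (f.injective h))⟩

theorem exists_base_iso [Finite B] [Finite B'] (hbase : ∀ b, (base.neighborSet b).Nontrivial)
    (hbase' : ∀ b, (base'.neighborSet b).Nontrivial) (hT : ∀ i, (T i).IsTree)
    (hT' : ∀ i, (T' i).IsTree) : ∃ φ : base ≃g base', ∀ b, f (.inl b) = .inl (φ b) := by
  choose φ hφ using map_inl_mem_range_inl f hbase hT'
  choose ψ hψ using map_inl_mem_range_inl f.symm hbase' hT
  refine ⟨⟨⟨φ, ψ, fun b => ?_, fun b => ?_⟩, fun {b c} => ?_⟩, fun b => (hφ b).symm⟩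
  · exact Sum.inl_injective (by rw [hψ, hφ, f.symm_apply_apply])
  · exact Sum.inl_injective (by rw [hφ, hψ, f.apply_symm_apply])
  · have h := f.map_adj_iff (v := .inl b) (w := .inl c)
    rwa [← hφ, ← hφ] at h

variable {f} {φ : base ≃g base'}

theorem symm_inl (hφ : ∀ b, f (.inl b) = .inl (φ b)) (b : B') :
    f.symm (.inl b) = .inl (φ.symm b) := by
  rw [RelIso.symm_apply_eq, hφ, φ.apply_symm_apply]

theorem map_mem_range_inl_iff (hφ : ∀ b, f (.inl b) = .inl (φ b))
    {y : B ⊕ Σ i, {w : W i // w ≠ t i}} :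
    f y ∈ Set.range Sum.inl ↔ y ∈ Set.range Sum.inl := by
  constructor
  · rintro ⟨b, hb⟩
    exact ⟨φ.symm b, by rw [← symm_inl hφ, hb, f.symm_apply_apply]⟩
  · rintro ⟨b, rfl⟩
    exact ⟨φ b, (hφ b).symm⟩

theorem exists_map_treeVertex_eq (hφ : ∀ b, f (.inl b) = .inl (φ b))
    (hx' : Function.Injective x') {i : ι} {i' : ι'}
    (hT : (T i).Preconnected) (hi : φ (x i) = x' i') (w : W i) :
    ∃ w', f (treeVertex t x i w) = treeVertex t' x' i' w' := by
  have root : f (treeVertex t x i (t i)) = treeVertex t' x' i' (t' i') := by simp [hφ, hi]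
  refine induction_on_adj_of_preconnected hT (r := t i)
    (P := fun w => ∃ w', f (treeVertex t x i w) = treeVertex t' x' i' w') ⟨t' i', root⟩ ?_ w
  rintro v w hadj ⟨v', hv'⟩
  obtain rfl | hw := eq_or_ne w (t i)
  · exact ⟨t' i', root⟩
  · have hfadj := f.map_adj_iff.2 (adj_treeVertex_iff (base := base) (x := x) (t := t).2 hadj)
    rw [hv'] at hfadj
    exact exists_treeVertex_of_adj_treeVertex hx'
      (by rwa [map_mem_range_inl_iff hφ, treeVertex_mem_range_inl_iff]) hfadj

theorem exists_tree_iso (hφ : ∀ b, f (.inl b) = .inl (φ b))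
    (hx : Function.Injective x) (hx' : Function.Injective x') {i : ι} {i' : ι'}
    (hT : (T i).Preconnected) (hT' : (T' i').Preconnected) (hi : φ (x i) = x' i') :
    ∃ e : T i ≃g T' i', e (t i) = t' i' ∧
      ∀ w, f (treeVertex t x i w) = treeVertex t' x' i' (e w) := by
  choose F hF using exists_map_treeVertex_eq hφ hx' hT hi
  choose G hG using exists_map_treeVertex_eq (symm_inl hφ) hx hT'
    ((φ.toEquiv.symm_apply_eq).2 hi.symm)
  refine ⟨⟨⟨F, G, fun w => ?_, fun w => ?_⟩, fun {v w} => ?_⟩, ?_, hF⟩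
  · exact treeVertex_injective i (by rw [← hG, ← hF, f.symm_apply_apply])
  · exact treeVertex_injective i' (by rw [← hF, ← hG, f.apply_symm_apply])
  · change (T' i').Adj (F v) (F w) ↔ _
    rw [← adj_treeVertex_iff (base := base') (x := x') (t := t'), ← hF, ← hF, f.map_adj_iff,
      adj_treeVertex_iff]
  · exact treeVertex_injective i' (show treeVertex t' x' i' (F (t i)) = _ by
      rw [← hF, treeVertex_root, treeVertex_root, hφ, hi])

theorem mem_range_of_nontrivial (hφ : ∀ b, f (.inl b) = .inl (φ b))
    {i : ι} [Nontrivial (W i)] (hT : (T i).Preconnected) :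
    φ (x i) ∈ Set.range x' := by
  obtain ⟨w, hw⟩ := hT.exists_adj_of_nontrivial (t i)
  have hadj := f.map_adj_iff.2 (adj_treeVertex_iff (base := base) (x := x) (t := t).2 hw)
  have hnot : f (treeVertex t x i w) ∉ Set.range Sum.inl := by
    rw [map_mem_range_inl_iff hφ, treeVertex_mem_range_inl_iff]
    exact hw.ne'
  rw [treeVertex_root, hφ] at hadj
  rcases hy : f (treeVertex t x i w) with b | ⟨j, w'⟩
  · exact (hnot ⟨b, hy.symm⟩).elim
  · rw [hy] at hadj
    exact ⟨j, hadj.1.symm⟩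

end Iso

theorem mem_range_treeAut_iff (hT : ∀ i, (T i).Preconnected) (hx : Function.Injective x)
    {f : attachTrees base T t x ≃g attachTrees base T t x} :
    f ∈ (treeAut base T t x).range ↔ ∀ b, f (.inl b) = .inl b := by
  constructor
  · rintro ⟨g, rfl⟩ b
    exact treeAut_inl g b
  · intro hf
    choose e he hfe using fun i =>
      exists_tree_iso (φ := RelIso.refl _) hf hx hx (hT i) (hT i) rfl
    refine ⟨fun i => ⟨e i, he i⟩, ?_⟩
    ext (b | ⟨i, w, hw⟩) : 1
    · exact (hf b).symm
    · have hew : e i w ≠ t i := fun h => hw ((e i).injective (h.trans (he i).symm))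
      have h := hfe i w
      rw [treeVertex_of_ne hw, treeVertex_of_ne hew] at h
      exact h.symm

end attachTrees

/-! ### Trees attached in isomorphic pairs -/

/-- The graph obtained from `base` by attaching, for each `k : κ`, one copy of the rooted tree
`(T k, t k)` at each of the two vertices `x (false, k)` and `x (true, k)`. -/
abbrev attachDoubledTrees {B : Type} (base : SimpleGraph B) {κ : Type} {W : κ → Type}
    (T : ∀ k, SimpleGraph (W k)) (t : ∀ k, W k) (x : Bool × κ → B) :
    SimpleGraph (B ⊕ Σ i : Bool × κ, {w : W i.2 // w ≠ t i.2}) :=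
  attachTrees base (fun i : Bool × κ => T i.2) (fun i => t i.2) x

namespace attachDoubledTrees

variable {B : Type} {base : SimpleGraph B} {κ : Type} {W : κ → Type} {T : ∀ k, SimpleGraph (W k)}
  {t : ∀ k, W k} {x : Bool × κ → B}

/-- Two families indexed by `κ`, read as a single family indexed by `Bool × κ`. -/
def prodPiMulEquiv (M : κ → Type) [∀ k, Mul (M k)] :
    (∀ k, M k) × (∀ k, M k) ≃* ∀ i : Bool × κ, M i.2 where
  toFun p i := if i.1 then p.2 i.2 else p.1 i.2
  invFun g := (fun k => g (false, k), fun k => g (true, k))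
  left_inv _ := rfl
  right_inv g := by ext ⟨_ | _, k⟩ <;> rfl
  map_mul' p q := by ext ⟨_ | _, k⟩ <;> rfl

/-- The action, fixing the base, of a pair of families of root-fixing automorphisms: the first
family acts on the trees at `x (false, k)` and the second on those at `x (true, k)`. -/
def treeAut (base : SimpleGraph B) (T : ∀ k, SimpleGraph (W k)) (t : ∀ k, W k)
    (x : Bool × κ → B) :
    (∀ k, autStab (T k) (t k)) × (∀ k, autStab (T k) (t k)) →*
      (attachDoubledTrees base T t x ≃g attachDoubledTrees base T t x) :=
  (attachTrees.treeAut base (fun i : Bool × κ => T i.2) (fun i => t i.2) x).comp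
    (prodPiMulEquiv fun k => autStab (T k) (t k)).toMonoidHom

theorem treeAut_injective : Function.Injective (treeAut base T t x) :=
  attachTrees.treeAut_injective.comp (prodPiMulEquiv _).injective

theorem mem_range_treeAut_iff (hT : ∀ k, (T k).Preconnected) (hx : Function.Injective x)
    {f : attachDoubledTrees base T t x ≃g attachDoubledTrees base T t x} :
    f ∈ (treeAut base T t x).range ↔ ∀ b, f (.inl b) = .inl b := by
  rw [← attachTrees.mem_range_treeAut_iff (fun i => hT i.2) hx, MonoidHom.mem_range,
    MonoidHom.mem_range, (prodPiMulEquiv fun k => autStab (T k) (t k)).surjective.exists]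
  rfl

/-- The automorphism that moves the base by `τ`, which exchanges `x (false, k)` and `x (true, k)`,
and carries each attached tree identically onto its other copy. -/
def exchange (T : ∀ k, SimpleGraph (W k)) (t : ∀ k, W k) (τ : base ≃g base)
    (hτx : ∀ b k, τ (x (b, k)) = x (!b, k)) :
    attachDoubledTrees base T t x ≃g attachDoubledTrees base T t x :=
  attachTrees.iso τ (Equiv.boolNot.prodCongr (Equiv.refl κ)) (fun i => hτx i.1 i.2)
    (fun i => RelIso.refl (T i.2).Adj) fun _ => rfl

theorem exchange_mul_self {τ : base ≃g base} (hτ : τ * τ = 1)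
    (hτx : ∀ b k, τ (x (b, k)) = x (!b, k)) :
    exchange T t τ hτx * exchange T t τ hτx = 1 := by
  ext (b | ⟨⟨_ | _, k⟩, w⟩) : 1
  · exact congrArg Sum.inl (DFunLike.congr_fun hτ b)
  · rfl
  · rfl

theorem exchange_mul_treeAut {τ : base ≃g base} (hτx : ∀ b k, τ (x (b, k)) = x (!b, k))
    (p : (∀ k, autStab (T k) (t k)) × (∀ k, autStab (T k) (t k))) :
    exchange T t τ hτx * treeAut base T t x p = treeAut base T t x p.swap * exchange T t τ hτx := by
  ext (b | ⟨⟨_ | _, k⟩, w⟩) : 1 <;> rfl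

theorem nonempty_aut_mulEquiv_wreathZ2 (hT : ∀ k, (T k).Preconnected) (hx : Function.Injective x)
    {τ : base ≃g base} (hτ : τ * τ = 1) (hτ_ne : τ ≠ 1) (hτx : ∀ b k, τ (x (b, k)) = x (!b, k))
    (hbase : ∀ f : attachDoubledTrees base T t x ≃g attachDoubledTrees base T t x,
      (∀ b, f (.inl b) = .inl b) ∨ ∀ b, f (.inl b) = .inl (τ b)) :
    Nonempty ((attachDoubledTrees base T t x ≃g attachDoubledTrees base T t x) ≃*
      wreathZ2 (∀ k, autStab (T k) (t k))) := by
  refine wreathZ2.nonempty_mulEquiv (treeAut base T t x) treeAut_injective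
    (exchange_mul_self hτ hτx) (fun p => mul_inv_eq_iff_eq_mul.2 (exchange_mul_treeAut hτx p))
    (fun hmem => hτ_ne ?_) fun f => ?_
  · ext b : 1
    exact Sum.inl_injective ((mem_range_treeAut_iff hT hx).1 hmem b)
  · rw [mem_range_treeAut_iff hT hx, mem_range_treeAut_iff hT hx]
    refine (hbase f).imp_right fun hf b => (hf (τ b)).trans ?_
    exact congrArg Sum.inl (DFunLike.congr_fun hτ b)

end attachDoubledTrees

/-! ### Theta graphs -/

section NeighborSet

variable {V V' : Type*} {G : SimpleGraph V} {G' : SimpleGraph V'}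

theorem encard_neighborSet_map (f : G ≃g G') (v : V) :
    (G'.neighborSet (f v)).encard = (G.neighborSet v).encard :=
  (Set.encard_congr (f.mapNeighborSet v)).symm

theorem map_eq_self_of_neighborSet_eq_pair (f : G ≃g G) {c : ℕ → V} {n : ℕ}
    (hc : ∀ i < n, G.neighborSet (c (i + 1)) = {c i, c (i + 2)}) (h₀ : f (c 0) = c 0)
    (h₁ : f (c 1) = c 1) : ∀ i ≤ n, f (c i) = c i ∧ f (c (i + 1)) = c (i + 1) := by
  intro i hi
  induction i with
  | zero => exact ⟨h₀, h₁⟩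
  | succ i ih =>
    obtain ⟨hi₀, hi₁⟩ := ih (by omega)
    have hmem : f (c (i + 2)) ∈ G.neighborSet (c (i + 1)) := by
      rw [← hi₁, mem_neighborSet, f.map_adj_iff, ← mem_neighborSet, hc i hi]
      simp
    rw [hc i hi, Set.mem_insert_iff] at hmem
    refine ⟨hi₁, hmem.elim (fun h => ?_) id⟩
    exact h.trans (f.injective (h.trans hi₀.symm)).symm

end NeighborSet

namespace theta

variable {p q r : ℕ}

/-- The vertices, starting at `v`, of the path from `v` to `u` whose internal vertices are
`x 0, x 1, …`; constantly `u` from the far end on. -/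
def pathVertex {n : ℕ} (x : Fin n → ThetaV p q r) : ℕ → ThetaV p q r
  | 0 => .v
  | i + 1 => if h : i < n then x ⟨i, h⟩ else .u

theorem pathVertex_succ {n : ℕ} (x : Fin n → ThetaV p q r) (i : Fin n) :
    pathVertex x (i + 1) = x i :=
  dif_pos i.2

theorem neighborSet_x1 (i : Fin p) :
    (theta p q r).neighborSet (.x1 i) = {pathVertex .x1 i, pathVertex .x1 (i + 2)} := by
  obtain ⟨_ | i, hi⟩ := i <;> ext (_ | _ | j | j | j) <;>
    simp only [mem_neighborSet, Set.mem_insert_iff, Set.mem_singleton_iff, theta, pathVertex] <;>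
    grind

theorem neighborSet_x2 (i : Fin q) :
    (theta p q r).neighborSet (.x2 i) = {pathVertex .x2 i, pathVertex .x2 (i + 2)} := by
  obtain ⟨_ | i, hi⟩ := i <;> ext (_ | _ | j | j | j) <;>
    simp only [mem_neighborSet, Set.mem_insert_iff, Set.mem_singleton_iff, theta, pathVertex] <;>
    grind

theorem neighborSet_x3 (i : Fin r) :
    (theta p q r).neighborSet (.x3 i) = {pathVertex .x3 i, pathVertex .x3 (i + 2)} := by
  obtain ⟨_ | i, hi⟩ := i <;> ext (_ | _ | j | j | j) <;>
    simp only [mem_neighborSet, Set.mem_insert_iff, Set.mem_singleton_iff, theta, pathVertex] <;>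
    grind

theorem neighborSet_v :
    (theta (p + 1) (q + 1) r).neighborSet .v = {.x1 0, .x2 0, pathVertex .x3 1} := by
  ext (_ | _ | j | j | j) <;>
    simp only [mem_neighborSet, Set.mem_insert_iff, Set.mem_singleton_iff, theta, pathVertex] <;>
    grind

theorem neighborSet_u :
    (theta (p + 1) (q + 1) r).neighborSet .u =
      {.x1 (Fin.last p), .x2 (Fin.last q), pathVertex .x3 r} := by
  obtain _ | r := r <;> ext (_ | _ | j | j | j) <;>
    simp only [mem_neighborSet, Set.mem_insert_iff, Set.mem_singleton_iff, theta, pathVertex] <;>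
    grind

theorem pathVertex_ne_pathVertex_add_two {n : ℕ} {x : Fin n → ThetaV p q r}
    (hx : Function.Injective x) (hu : ∀ i, x i ≠ .u) (hv : ∀ i, x i ≠ .v) (i : Fin n) :
    pathVertex x i ≠ pathVertex x (i + 2) := by
  obtain ⟨_ | i, hi⟩ := i
  · grind [pathVertex]
  · grind [pathVertex, Function.Injective]

theorem encard_neighborSet_of_ne_hub {a : ThetaV p q r} (hu : a ≠ .u) (hv : a ≠ .v) :
    ((theta p q r).neighborSet a).encard = 2 := by
  rcases a with _ | _ | i | i | i
  · exact (hu rfl).elim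
  · exact (hv rfl).elim
  · rw [neighborSet_x1, Set.encard_pair]
    exact pathVertex_ne_pathVertex_add_two (fun _ _ => by simp) (by simp) (by simp) i
  · rw [neighborSet_x2, Set.encard_pair]
    exact pathVertex_ne_pathVertex_add_two (fun _ _ => by simp) (by simp) (by simp) i
  · rw [neighborSet_x3, Set.encard_pair]
    exact pathVertex_ne_pathVertex_add_two (fun _ _ => by simp) (by simp) (by simp) i

theorem encard_neighborSet_u : ((theta (p + 1) (q + 1) r).neighborSet .u).encard = 3 := by
  rw [neighborSet_u, Set.encard_eq_three]
  refine ⟨_, _, _, ?_, ?_, ?_, rfl⟩ <;> cases r <;> simp [pathVertex]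

theorem encard_neighborSet_v : ((theta (p + 1) (q + 1) r).neighborSet .v).encard = 3 := by
  rw [neighborSet_v, Set.encard_eq_three]
  refine ⟨_, _, _, ?_, ?_, ?_, rfl⟩ <;> cases r <;> simp [pathVertex]

theorem encard_neighborSet_eq_three_iff {a : ThetaV (p + 1) (q + 1) r} :
    ((theta (p + 1) (q + 1) r).neighborSet a).encard = 3 ↔ a = .u ∨ a = .v := by
  constructor
  · contrapose!
    rintro ⟨hu, hv⟩
    rw [encard_neighborSet_of_ne_hub hu hv]
    decide
  · rintro (rfl | rfl)
    exacts [encard_neighborSet_u, encard_neighborSet_v]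

theorem neighborSet_nontrivial (a : ThetaV (p + 1) (q + 1) r) :
    ((theta (p + 1) (q + 1) r).neighborSet a).Nontrivial := by
  rw [← Set.one_lt_encard_iff_nontrivial]
  by_cases ha : a = .u ∨ a = .v
  · rw [encard_neighborSet_eq_three_iff.2 ha]
    decide
  · rw [not_or] at ha
    rw [encard_neighborSet_of_ne_hub ha.1 ha.2]
    decide

theorem map_eq_self_of_path {φ : theta p q r ≃g theta p q r} {n : ℕ} {x : Fin n → ThetaV p q r}
    (hx : ∀ i, (theta p q r).neighborSet (x i) = {pathVertex x i, pathVertex x (i + 2)})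
    (hv : φ .v = .v) (h₁ : φ (pathVertex x 1) = pathVertex x 1) (i : Fin n) : φ (x i) = x i := by
  have hpath (i) (hi : i < n) : (theta p q r).neighborSet (pathVertex x (i + 1)) =
      {pathVertex x i, pathVertex x (i + 2)} := by
    rw [← hx ⟨i, hi⟩, ← pathVertex_succ x ⟨i, hi⟩]
  rw [← pathVertex_succ x i]
  exact (map_eq_self_of_neighborSet_eq_pair φ hpath hv h₁ i i.2.le).2

section Aut

variable (φ : theta (p + 1) (q + 1) r ≃g theta (p + 1) (q + 1) r)

theorem map_eq_hub_iff {a : ThetaV (p + 1) (q + 1) r} :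
    φ a = .u ∨ φ a = .v ↔ a = .u ∨ a = .v := by
  rw [← encard_neighborSet_eq_three_iff, encard_neighborSet_map, encard_neighborSet_eq_three_iff]

variable {φ}

theorem eq_one_of_map_eq_self (hv : φ .v = .v) (h₁ : φ (.x1 0) = .x1 0) (h₂ : φ (.x2 0) = .x2 0) :
    φ = 1 := by
  have hu : φ .u = .u := by
    refine ((map_eq_hub_iff φ).2 (.inl rfl)).resolve_right fun h => ?_
    simpa using φ.injective (h.trans hv.symm)
  have h₃ : φ (pathVertex .x3 1) = pathVertex .x3 1 := by
    have hmem : φ (pathVertex .x3 1) ∈ (theta (p + 1) (q + 1) r).neighborSet .v := by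
      rw [← hv, mem_neighborSet, φ.map_adj_iff, ← mem_neighborSet, neighborSet_v]
      simp
    have hne₁ : φ (pathVertex .x3 1) ≠ .x1 0 := by
      rw [← h₁, φ.injective.ne_iff]
      cases r <;> simp [pathVertex]
    have hne₂ : φ (pathVertex .x3 1) ≠ .x2 0 := by
      rw [← h₂, φ.injective.ne_iff]
      cases r <;> simp [pathVertex]
    rw [neighborSet_v] at hmem
    exact (hmem.resolve_left hne₁).resolve_left hne₂
  ext a : 1
  rcases a with _ | _ | i | i | i
  · exact hu
  · exact hv
  · exact map_eq_self_of_path neighborSet_x1 hv h₁ i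
  · exact map_eq_self_of_path neighborSet_x2 hv h₂ i
  · exact map_eq_self_of_path neighborSet_x3 hv h₃ i

end Aut

section Twins

variable {n : ℕ}

/-- The internal vertices of the first two paths of `theta n n r`, which have equal length,
numbered from `v`. -/
def twin (n r : ℕ) : Bool → Fin n → ThetaV n n r
  | false => .x1
  | true => .x2

theorem twin_inj {b b' : Bool} {i j : Fin n} : twin n r b i = twin n r b' j ↔ b = b' ∧ i = j := by
  cases b <;> cases b' <;> simp [twin]

theorem exists_twin_eq {a : ThetaV n n r} (hu : a ≠ .u) (hv : a ≠ .v) (h₃ : a ∉ Set.range .x3) :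
    ∃ b i, a = twin n r b i := by
  rcases a with _ | _ | i | i | i
  · exact (hu rfl).elim
  · exact (hv rfl).elim
  · exact ⟨false, i, rfl⟩
  · exact ⟨true, i, rfl⟩
  · exact (h₃ ⟨i, rfl⟩).elim

theorem adj_v_twin_iff {b : Bool} {i : Fin (n + 1)} :
    (theta (n + 1) (n + 1) r).Adj .v (twin (n + 1) r b i) ↔ i = 0 := by
  cases b <;> exact Fin.val_eq_zero_iff

theorem adj_u_twin_iff {b : Bool} {i : Fin (n + 1)} :
    (theta (n + 1) (n + 1) r).Adj .u (twin (n + 1) r b i) ↔ i = Fin.last n := by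
  cases b <;> exact (Fin.ext_iff (b := Fin.last n)).symm

theorem adj_twin_succ (b : Bool) (i : Fin n) :
    (theta (n + 1) (n + 1) r).Adj (twin (n + 1) r b i.castSucc) (twin (n + 1) r b i.succ) := by
  cases b <;> exact .inl rfl

/-- The automorphism of `theta n n r` that exchanges the first two paths. -/
def swapTwins (n r : ℕ) : theta n n r ≃g theta n n r where
  toFun
    | .u => .u
    | .v => .v
    | .x1 i => .x2 i
    | .x2 i => .x1 i
    | .x3 i => .x3 i
  invFun
    | .u => .u
    | .v => .v
    | .x1 i => .x2 i
    | .x2 i => .x1 i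
    | .x3 i => .x3 i
  left_inv a := by cases a <;> rfl
  right_inv a := by cases a <;> rfl
  map_rel_iff' {a b} := by cases a <;> cases b <;> simp [theta]

theorem swapTwins_mul_self : swapTwins n r * swapTwins n r = 1 := by
  ext a : 1
  cases a <;> rfl

theorem swapTwins_ne_one : swapTwins (n + 1) r ≠ 1 := fun h => by
  simpa [swapTwins] using DFunLike.congr_fun h (.x1 0)

theorem swapTwins_twin (b : Bool) (i : Fin n) :
    swapTwins n r (twin n r b i) = twin n r (!b) i := by
  cases b <;> rfl

variable {φ : theta (n + 1) (n + 1) r ≃g theta (n + 1) (n + 1) r}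

theorem map_twin_ne_hub (b : Bool) (i : Fin (n + 1)) :
    φ (twin (n + 1) r b i) ≠ .u ∧ φ (twin (n + 1) r b i) ≠ .v := by
  rw [← not_or, map_eq_hub_iff]
  cases b <;> simp [twin]

theorem map_twin_mem_range_x3 {b : Bool} (h : φ (twin (n + 1) r b 0) ∈ Set.range .x3)
    (i : Fin (n + 1)) : φ (twin (n + 1) r b i) ∈ Set.range .x3 := by
  induction i using Fin.induction with
  | zero => exact h
  | succ i ih =>
    obtain ⟨j, hj⟩ := ih
    have hadj := φ.map_adj_iff.2 (adj_twin_succ (r := r) b i)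
    rw [← hj] at hadj
    obtain ⟨hu, hv⟩ := map_twin_ne_hub (φ := φ) b i.succ
    generalize φ (twin (n + 1) r b i.succ) = a at *
    rcases a with _ | _ | k | k | k
    exacts [(hu rfl).elim, (hv rfl).elim, hadj.elim, hadj.elim, ⟨k, rfl⟩]

theorem map_v_eq_and_exists_map_twin_zero_eq {b : Bool}
    (hlast : ∀ b', φ (twin (n + 1) r b 0) ≠ twin (n + 1) r b' (Fin.last n))
    (h₃ : ∃ i, φ (twin (n + 1) r b i) ∉ Set.range .x3) :
    φ .v = .v ∧ ∃ b', φ (twin (n + 1) r b 0) = twin (n + 1) r b' 0 := by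
  obtain ⟨i, hi⟩ := h₃
  obtain ⟨hu, hv⟩ := map_twin_ne_hub (φ := φ) b 0
  obtain ⟨b', j, hj⟩ := exists_twin_eq hu hv fun h => hi (map_twin_mem_range_x3 h i)
  have hadj := φ.map_adj_iff.2 (adj_v_twin_iff (r := r) (b := b).2 rfl)
  rw [hj] at hadj
  rcases (map_eq_hub_iff φ).2 (.inr rfl) with hφv | hφv
  · rw [hφv, adj_u_twin_iff] at hadj
    exact (hlast b' (by rw [hj, hadj])).elim
  · rw [hφv, adj_v_twin_iff] at hadj
    exact ⟨hφv, b', by rw [hj, hadj]⟩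

theorem eq_one_or_eq_swapTwins
    (hlast : ∀ b b', φ (twin (n + 1) r b 0) ≠ twin (n + 1) r b' (Fin.last n))
    (h₃ : ∀ b, ∃ i, φ (twin (n + 1) r b i) ∉ Set.range .x3) :
    φ = 1 ∨ φ = swapTwins (n + 1) r := by
  obtain ⟨hv, b, hb⟩ := map_v_eq_and_exists_map_twin_zero_eq (hlast false) (h₃ false)
  obtain ⟨-, c, hc⟩ := map_v_eq_and_exists_map_twin_zero_eq (hlast true) (h₃ true)
  have hbc : b ≠ c := fun h => by
    have := φ.injective (hb.trans (h ▸ hc.symm))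
    simp [twin_inj] at this
  cases b <;> cases c
  · exact (hbc rfl).elim
  · exact .inl (eq_one_of_map_eq_self hv hb hc)
  · have h : swapTwins (n + 1) r * φ = 1 :=
      eq_one_of_map_eq_self (congrArg (swapTwins _ _) hv) (congrArg (swapTwins _ _) hb)
        (congrArg (swapTwins _ _) hc)
    exact .inr (mul_left_cancel (h.trans swapTwins_mul_self.symm))
  · exact (hbc rfl).elim

end Twins

end theta

theorem exists_iso_of_subsingleton {V V' : Type*} [Subsingleton V] [Subsingleton V']
    (G : SimpleGraph V) (G' : SimpleGraph V') (v : V) (v' : V') : ∃ e : G ≃g G', e v = v' := by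
  refine ⟨⟨⟨fun _ => v', fun _ => v, fun _ => Subsingleton.elim _ _,
    fun _ => Subsingleton.elim _ _⟩, fun {_ _} => ?_⟩, rfl⟩
  exact iff_of_false (fun h => h.ne (Subsingleton.elim _ _)) fun h => h.ne (Subsingleton.elim _ _)

namespace theta

variable {n r : ℕ}

instance (p q r : ℕ) : Finite (ThetaV p q r) := by
  refine Set.finite_univ_iff.1 <| ((Set.toFinite {.u, .v}).union <| (Set.finite_range .x1).union <|
    (Set.finite_range .x2).union (Set.finite_range .x3)).subset fun a _ => ?_
  cases a <;> simp

/-- The attachment vertices on the first two paths of `theta n n r`, numbered from `u`. -/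
def twinAttach (n r : ℕ) (i : Bool × Fin n) : ThetaV n n r :=
  twin n r i.1 i.2.rev

theorem twinAttach_injective : Function.Injective (twinAttach n r) := by
  rintro ⟨b, i⟩ ⟨b', i'⟩ h
  simpa [twinAttach, twin_inj] using h

theorem twinAttach_notMem_range_x3 (i : Bool × Fin n) : twinAttach n r i ∉ Set.range .x3 := by
  obtain ⟨_ | _, i⟩ := i <;> simp [twinAttach, twin]

theorem nonempty_aut_attachDoubledTrees_mulEquiv {W : Fin (n + 1) → Type}
    {T : ∀ k, SimpleGraph (W k)} {t : ∀ k, W k} (hT : ∀ k, (T k).IsTree)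
    (hne : ∀ e : T 0 ≃g T (Fin.last n), e (t 0) ≠ t (Fin.last n)) :
    Nonempty ((attachDoubledTrees (theta (n + 1) (n + 1) r) T t (twinAttach _ _) ≃g
        attachDoubledTrees (theta (n + 1) (n + 1) r) T t (twinAttach _ _)) ≃*
      wreathZ2 (∀ k, autStab (T k) (t k))) := by
  have preconnected (k) := (hT k).connected.preconnected
  have exists_nontrivial : ∃ k, Nontrivial (W k) := by
    by_contra! h
    obtain ⟨e, he⟩ := exists_iso_of_subsingleton (T 0) (T (Fin.last n)) (t 0) (t _)
    exact hne e he
  refine attachDoubledTrees.nonempty_aut_mulEquiv_wreathZ2 preconnected twinAttach_injective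
    swapTwins_mul_self swapTwins_ne_one (fun b k => swapTwins_twin b k.rev) fun f => ?_
  obtain ⟨φ, hφ⟩ := attachTrees.exists_base_iso f neighborSet_nontrivial neighborSet_nontrivial
    (fun i => hT i.2) fun i => hT i.2
  have map_zero_ne_last (b b') :
      φ (twin (n + 1) r b 0) ≠ twin (n + 1) r b' (Fin.last n) := fun h => by
    obtain ⟨e, he, -⟩ := attachTrees.exists_tree_iso (i := (b, Fin.last n)) (i' := (b', 0)) hφ
      twinAttach_injective twinAttach_injective (preconnected _) (preconnected _)
      (by simpa [twinAttach] using h)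
    exact hne e.symm ((e.toEquiv.symm_apply_eq).2 he.symm)
  have exists_notMem_range_x3 (b) : ∃ i, φ (twin (n + 1) r b i) ∉ Set.range .x3 := by
    obtain ⟨k, hk⟩ := exists_nontrivial
    obtain ⟨j, hj⟩ := attachTrees.mem_range_of_nontrivial (i := (b, k)) hφ (preconnected k)
    exact ⟨k.rev, fun h => twinAttach_notMem_range_x3 j (hj ▸ h)⟩
  rcases eq_one_or_eq_swapTwins map_zero_ne_last exists_notMem_range_x3 with rfl | rfl
  exacts [.inl hφ, .inr hφ]

end theta

/-- A family of groups indexed by `Fin 3`, with its product written out. -/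
def piFinThreeMulEquiv (M : Fin 3 → Type) [∀ i, Mul (M i)] : (∀ i, M i) ≃* M 0 × M 1 × M 2 where
  toFun g := (g 0, g 1, g 2)
  invFun p
    | 0 => p.1
    | 1 => p.2.1
    | 2 => p.2.2
  left_inv g := by ext i; fin_cases i <;> rfl
  right_inv _ := rfl
  map_mul' _ _ := rfl

theorem nonempty_stmt4Graph_iso_attachDoubledTrees (m : ℕ) {WA WB : Fin 3 → Type}
    {TA : ∀ j, SimpleGraph (WA j)} {TB : ∀ j, SimpleGraph (WB j)} {tA : ∀ j, WA j}
    {tB : ∀ j, WB j} (hiso : ∀ j, ∃ e : TA j ≃g TB j, e (tA j) = tB j) :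
    Nonempty (stmt4Graph m TA TB tA tB ≃g
      attachDoubledTrees (theta 3 3 m) TA tA (theta.twinAttach 3 m)) := by
  choose e he using hiso
  have two_sub_eq_rev (j : Fin 3) : (⟨2 - j, by omega⟩ : Fin 3) = j.rev := by
    ext
    simp only [Fin.val_rev]
    omega
  exact ⟨attachTrees.iso (RelIso.refl _) (Equiv.boolProdEquivSum (Fin 3)).symm
    (Sum.rec (fun j => congrArg ThetaV.x1 (two_sub_eq_rev j))
      fun j => congrArg ThetaV.x2 (two_sub_eq_rev j))
    (Sum.rec (fun j => RelIso.refl (TA j).Adj) fun j => (e j).symm)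
    (Sum.rec (fun _ => rfl) fun j => (e j).toEquiv.symm_apply_eq.2 (he j).symm)⟩

theorem aut_bicyclic_six_trees_general
    (m : ℕ) {WA WB : Fin 3 → Type}
    (TA : ∀ j, SimpleGraph (WA j)) (TB : ∀ j, SimpleGraph (WB j))
    (tA : ∀ j, WA j) (tB : ∀ j, WB j)
    (hAtree : ∀ j, (TA j).IsTree)
    (hiso : ∀ j, ∃ e : TA j ≃g TB j, e (tA j) = tB j)
    (hne : ∀ e : TA 0 ≃g TA 2, e (tA 0) ≠ tA 2) :
    Nonempty ((stmt4Graph m TA TB tA tB ≃g stmt4Graph m TA TB tA tB) ≃*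
      wreathZ2 (↥(autStab (TA 0) (tA 0)) × ↥(autStab (TA 1) (tA 1)) ×
        ↥(autStab (TA 2) (tA 2)))) := by
  obtain ⟨toDoubled⟩ := nonempty_stmt4Graph_iso_attachDoubledTrees m hiso
  obtain ⟨autEquiv⟩ := theta.nonempty_aut_attachDoubledTrees_mulEquiv (r := m) hAtree hne
  exact ⟨(autCongr toDoubled).trans <| autEquiv.trans <|
    wreathZ2.congr <| piFinThreeMulEquiv fun j => autStab (TA j) (tA j)⟩

/-- Lemma 2.4. With `T₁ ≅ T₂`, `T₃ ≅ T₄`, `T₅ ≅ T₆` as rooted trees,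
`T₁ ≇ T₅` as rooted trees, and `ℓ ≠ 4` or one of `T₁, T₃, T₅` nontrivial, the automorphism
group of `Δ` is `(G₁ × G₂ × G₃) ≀ Z₂` with `G₁ = Aut(T₁)_root`, `G₂ = Aut(T₃)_root`,
`G₃ = Aut(T₅)_root`. -/
theorem aut_bicyclic_six_trees
    (m : ℕ) {WA WB : Fin 3 → Type} [∀ j, Fintype (WA j)] [∀ j, Fintype (WB j)]
    (TA : ∀ j, SimpleGraph (WA j)) (TB : ∀ j, SimpleGraph (WB j))
    (tA : ∀ j, WA j) (tB : ∀ j, WB j)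
    (hAtree : ∀ j, (TA j).IsTree) (hBtree : ∀ j, (TB j).IsTree)
    (hiso : ∀ j, ∃ e : TA j ≃g TB j, e (tA j) = tB j)
    (hne : ∀ e : TA 0 ≃g TA 2, e (tA 0) ≠ tA 2)
    (hside : m + 1 ≠ 4 ∨ Nontrivial (WA 0) ∨ Nontrivial (WA 1) ∨ Nontrivial (WA 2)) :
    Nonempty ((stmt4Graph m TA TB tA tB ≃g stmt4Graph m TA TB tA tB) ≃*
      wreathZ2 (↥(autStab (TA 0) (tA 0)) × ↥(autStab (TA 1) (tA 1)) ×
        ↥(autStab (TA 2) (tA 2)))) := by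
  exact aut_bicyclic_six_trees_general m TA TB tA tB hAtree hiso hne
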